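/- Let Π, Σ and K be finite types, and let p : ℕ → Π, s : ℕ → List Σ and c : ℕ → K be arbitrary sequences (the predicate symbols and symbol strings of the selected subgoals of an infinite derivation, and the clauses applied at each step). Then there exists a strictly monotone function g : ℕ → ℕ such that p(g(i)) is the same predicate symbol for all i, c(g(i)) is the same clause for all i, and s(g(i)) is a sublist of s(g(i+1)) for every i. Consequently, for every repetition number r ≥ 3 there exist indices g₁ < g₂ < … < g_r at which the same clause is applied and each atom (p(g_j), s(g_j)) loops into (p(g_{j+1}), s(g_{j+1})). -/

import Mathlib

/-!
By the pigeonhole principle some pair (predicate symbol, clause) recurs infinitely often. Along that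
subsequence the symbol strings are words over a finite alphabet, which Higman's lemma
well-quasi-orders by the sublist relation, so a further subsequence is increasing.
-/

section Higman

variable {α : Type*}

theorem sublistForall₂_eq_iff {l₁ l₂ : List α} :
    List.SublistForall₂ (· = ·) l₁ l₂ ↔ l₁.Sublist l₂ := by
  simp only [List.sublistForall₂_iff, List.forall₂_eq_eq_eq, exists_eq_left']

instance isPreorder_sublist : IsPreorder (List α) List.Sublist where
  refl := List.Sublist.refl
  trans _ _ _ := List.Sublist.trans

theorem wellQuasiOrdered_sublistForall₂ {r : α → α → Prop} [IsPreorder α r]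
    (hr : WellQuasiOrdered r) : WellQuasiOrdered (List.SublistForall₂ r) := by
  have higman := Set.PartiallyWellOrderedOn.partiallyWellOrderedOn_sublistForall₂ r
    (Set.partiallyWellOrderedOn_univ_iff.mpr hr)
  simpa only [Set.mem_univ, implies_true, Set.ofPred_true, Set.partiallyWellOrderedOn_univ_iff]
    using higman

theorem wellQuasiOrdered_sublist [Finite α] :
    WellQuasiOrdered (List.Sublist : List α → List α → Prop) := by
  simpa only [WellQuasiOrdered, sublistForall₂_eq_iff] using
    wellQuasiOrdered_sublistForall₂ (Finite.wellQuasiOrdered (α := α) (· = ·))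

end Higman

section Subsequences

variable {α β : Type*} [Finite α]

theorem exists_constant_subseq (f : ℕ → α) :
    ∃ g : ℕ ↪o ℕ, ∀ i j, f (g i) = f (g j) := by
  obtain ⟨g, hg⟩ := (Finite.wellQuasiOrdered (α := α) (· = ·)).exists_monotone_subseq f
  exact ⟨g, fun i j => (hg 0 i i.zero_le).symm.trans (hg 0 j j.zero_le)⟩

theorem exists_constant_monotone_subseq {r : β → β → Prop} [IsPreorder β r]
    (hr : WellQuasiOrdered r) (f : ℕ → α) (x : ℕ → β) :
    ∃ g : ℕ ↪o ℕ, (∀ i j, f (g i) = f (g j)) ∧ ∀ i j, i ≤ j → r (x (g i)) (x (g j)) := by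
  obtain ⟨g, f_const⟩ := exists_constant_subseq f
  obtain ⟨h, x_mono⟩ := hr.exists_monotone_subseq (x ∘ g)
  exact ⟨h.trans g, fun i j => f_const (h i) (h j), x_mono⟩

end Subsequences

/-- combinatorial content of the paper's Theorems 1 and 4.
Let `P` (predicate symbols), `σ` (the alphabet of symbol strings) and `K`
(clauses) be finite types, and let `p : ℕ → P`, `s : ℕ → List σ`, `c : ℕ → K`
be arbitrary sequences.  Then there is a strictly monotone `g : ℕ → ℕ` along
which the predicate symbol is constant, the applied clause is constant, and the
symbol strings increase under the sublist (projection) order; consequently every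
infinite derivation of a finite logic program exhibits, for every repetition
number `r ≥ 3`, the LP-check pattern of `r` loop goals with the same clause
applied. -/
theorem lp_check_pattern {P σ K : Type*} [Fintype P] [Fintype σ] [Fintype K]
    (p : ℕ → P) (s : ℕ → List σ) (c : ℕ → K) :
    ∃ g : ℕ → ℕ, StrictMono g ∧
      (∀ i j : ℕ, p (g i) = p (g j)) ∧
      (∀ i j : ℕ, c (g i) = c (g j)) ∧
      (∀ i : ℕ, (s (g i)).Sublist (s (g (i + 1)))) := by
  obtain ⟨g, pc_const, s_mono⟩ :=
    exists_constant_monotone_subseq wellQuasiOrdered_sublist (fun n => (p n, c n)) s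
  exact ⟨g, g.strictMono, fun i j => congrArg Prod.fst (pc_const i j),
    fun i j => congrArg Prod.snd (pc_const i j), fun i => s_mono i (i + 1) i.le_succ⟩
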